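/- Let (X,d) be a compact metric space and f: X → ℝ a Lipschitz function. Then for every x ∈ X the subsolution property of the Hamilton–Jacobi equation holds: (d/dt) Q_t f(x) + (1/2) |D Q_t f|²(x) ≤ 0 for every t ∈ (0,∞) with at most countably many exceptions (at such t the derivative (d/dt) Q_t f(x) exists). -/

import Mathlib

open Filter Topology Set MeasureTheory
open scoped ENNReal NNReal

/-- Hopf-Lax semigroup: `Q_t f (x) = inf_y ( f y + d(x,y)^2 / (2t) )`, with `Q_0 f = f`. -/
noncomputable def HL {X : Type*} [MetricSpace X] (f : X → ℝ) (t : ℝ) (x : X) : ℝ :=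
  if t = 0 then f x else ⨅ y : X, (f y + dist x y ^ 2 / (2 * t))

/-- The set of minimizers of `y ↦ f y + d(x,y)^2/(2t)`. -/
def minSet {X : Type*} [MetricSpace X] (f : X → ℝ) (t : ℝ) (x : X) : Set X :=
  {y | ∀ z : X, f y + dist x y ^ 2 / (2 * t) ≤ f z + dist x z ^ 2 / (2 * t)}

/-- `D⁺(x,t)`: the largest distance from `x` to a minimizer of `y ↦ f y + d(x,y)^2/(2t)`,
with `D⁺(x,0) = 0`. -/
noncomputable def Dplus {X : Type*} [MetricSpace X] (f : X → ℝ) (x : X) (t : ℝ) : ℝ :=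
  if t = 0 then 0 else sSup (dist x '' minSet f t x)

/-- `D⁻(x,t)`: the smallest distance from `x` to a minimizer of `y ↦ f y + d(x,y)^2/(2t)`,
with `D⁻(x,0) = 0`. -/
noncomputable def Dminus {X : Type*} [MetricSpace X] (f : X → ℝ) (x : X) (t : ℝ) : ℝ :=
  if t = 0 then 0 else sInf (dist x '' minSet f t x)

/-- The slope (local Lipschitz constant) of `u` at `x`:
`|Du|(x) = limsup_{y→x} |u y - u x| / d(y,x)` (this `Real`-valued `limsup` is `0` at isolated
points, where the punctured neighborhood filter is trivial). -/
noncomputable def locSlope {X : Type*} [MetricSpace X] (u : X → ℝ) (x : X) : ℝ :=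
  limsup (fun y => |u y - u x| / dist y x) (𝓝[≠] x)

/-
In the variable `s = t⁻¹`, the map `Q_t f (x)` is an infimum of affine functions, hence concave on
`(0, ∞)` and differentiable off a countable set. If `y` minimizes `f y + d(x,y)² / (2t)`, then
`τ ↦ f y + d(x,y)² / (2τ)` lies above `τ ↦ Q_τ f (x)` and touches it at `t`, so wherever the
derivative exists it equals `-d(x,y)² / (2t²)` for every minimizer `y`; that is, it equals
`-(D⁺)² / (2t²)`. Testing `Q_t f (x)` with a minimizer for `x'`, and vice versa, bounds the
difference quotient by `(max (D⁺ x) (D⁺ x') + d(x,x') / 2) / t`, and since `D⁺` is upper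
semicontinuous in space, the slope of `Q_t f` at `x` is at most `D⁺ / t`.
-/

section Convex

theorem concaveOn_ciInf {ι E : Type*} [Nonempty ι] [AddCommMonoid E] [SMul ℝ E] {s : Set E}
    {g : ι → E → ℝ} (hg : ∀ i, ConcaveOn ℝ s (g i))
    (hbdd : ∀ x ∈ s, BddBelow (range fun i => g i x)) :
    ConcaveOn ℝ s fun x => ⨅ i, g i x := by
  refine ⟨(hg (Classical.arbitrary ι)).1, fun x hx y hy a b ha hb hab => le_ciInf fun i => ?_⟩
  calc a • (⨅ i, g i x) + b • (⨅ i, g i y) ≤ a • g i x + b • g i y := by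
        gcongr
        exacts [ciInf_le (hbdd x hx) i, ciInf_le (hbdd y hy) i]
    _ ≤ g i (a • x + b • y) := (hg i).2 hx hy ha hb hab

variable {S : Set ℝ} {g : ℝ → ℝ}

theorem rightDeriv_le_leftDeriv_of_continuousAt (hg : ConvexOn ℝ S g) {s : ℝ}
    (hs : s ∈ interior S) (hcont : ContinuousAt (fun r => derivWithin g (Ioi r) r) s) :
    derivWithin g (Ioi s) s ≤ derivWithin g (Iio s) s := by
  refine le_of_tendsto (hcont.tendsto.mono_left (nhdsWithin_le_nhds (s := Iio s))) ?_
  filter_upwards [nhdsWithin_le_nhds (isOpen_interior.mem_nhds hs), self_mem_nhdsWithin]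
    with r hr hrs
  exact (hg.rightDeriv_le_slope_of_mem_interior hr (interior_subset hs) hrs).trans
    (hg.slope_le_leftDeriv_of_mem_interior (interior_subset hr) hs hrs)

theorem differentiableAt_of_continuousAt_rightDeriv (hg : ConvexOn ℝ S g) {s : ℝ}
    (hs : s ∈ interior S) (hcont : ContinuousAt (fun r => derivWithin g (Ioi r) r) s) :
    DifferentiableAt ℝ g s := by
  have hleft := hg.hasDerivWithinAt_leftDeriv_of_mem_interior hs
  have hright := hg.hasDerivWithinAt_rightDeriv_of_mem_interior hs
  rw [(hg.leftDeriv_le_rightDeriv_of_mem_interior hs).antisymm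
    (rightDeriv_le_leftDeriv_of_continuousAt hg hs hcont)] at hleft
  rw [hasDerivWithinAt_iff_tendsto_slope' self_notMem_Iio] at hleft
  rw [hasDerivWithinAt_iff_tendsto_slope' self_notMem_Ioi] at hright
  exact (hasDerivAt_iff_tendsto_slope_left_right.2 ⟨hleft, hright⟩).differentiableAt

theorem countable_not_differentiableAt_of_convexOn (hg : ConvexOn ℝ S g) :
    {s ∈ interior S | ¬ DifferentiableAt ℝ g s}.Countable := by
  refine hg.monotoneOn_rightDeriv.countable_not_continuousWithinAt.mono ?_
  rintro s ⟨hs, hdiff⟩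
  refine ⟨hs, fun hcont => hdiff ?_⟩
  exact differentiableAt_of_continuousAt_rightDeriv hg hs
    (hcont.continuousAt (isOpen_interior.mem_nhds hs))

theorem countable_not_differentiableAt_of_concaveOn (hg : ConcaveOn ℝ S g) :
    {s ∈ interior S | ¬ DifferentiableAt ℝ g s}.Countable := by
  simpa only [differentiableAt_neg_iff] using countable_not_differentiableAt_of_convexOn hg.neg

end Convex

theorem bddBelow_range_of_lowerSemicontinuous {Y β : Type*} [TopologicalSpace Y] [CompactSpace Y]
    [LinearOrder β] [Nonempty β] {g : Y → β} (hg : LowerSemicontinuous g) :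
    BddBelow (range g) := by
  simpa only [image_univ] using
    (hg.lowerSemicontinuousOn univ).bddBelow_of_isCompact isCompact_univ

section HopfLax

variable {X : Type*} [MetricSpace X] {f : X → ℝ} {t : ℝ} {x y : X}

section Slope

variable {u : X → ℝ}

theorem locSlope_nonneg : 0 ≤ locSlope u x := by
  rw [locSlope, limsup_eq]
  rcases eq_or_neBot (𝓝[≠] x) with hbot | hne
  · simp [hbot]
  · refine Real.sInf_nonneg fun a ha => ?_
    obtain ⟨y, hy⟩ := (mem_ofPred.1 ha).exists
    exact (div_nonneg (abs_nonneg _) dist_nonneg).trans hy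

theorem locSlope_le_of_forall_gt {C : ℝ} (hC : 0 ≤ C)
    (h : ∀ c > C, ∀ᶠ y in 𝓝[≠] x, |u y - u x| / dist y x ≤ c) : locSlope u x ≤ C := by
  rcases eq_or_neBot (𝓝[≠] x) with hbot | hne
  · simpa [locSlope, limsup_eq, hbot] using hC
  · refine le_of_forall_gt_imp_ge_of_dense fun c hc => limsup_le_of_le ?_ (h c hc)
    exact isCoboundedUnder_le_of_le _ fun y => div_nonneg (abs_nonneg (u y - u x)) dist_nonneg

end Slope

section BddBelow

theorem bddBelow_range_add_dist_sq (hf : BddBelow (range f)) (ht : 0 ≤ t) (x : X) :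
    BddBelow (range fun y => f y + dist x y ^ 2 / (2 * t)) := by
  obtain ⟨c, hc⟩ := hf
  refine ⟨c, forall_mem_range.2 fun y => ?_⟩
  exact (hc (mem_range_self y)).trans (le_add_of_nonneg_right (by positivity))

theorem HL_le (hf : BddBelow (range f)) (ht : 0 < t) (x y : X) :
    HL f t x ≤ f y + dist x y ^ 2 / (2 * t) := by
  rw [HL, if_neg ht.ne']
  exact ciInf_le (bddBelow_range_add_dist_sq hf ht.le x) y

theorem HL_eq_of_mem_minSet (ht : t ≠ 0) (hy : y ∈ minSet f t x) :
    HL f t x = f y + dist x y ^ 2 / (2 * t) := by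
  have : Nonempty X := ⟨x⟩
  rw [HL, if_neg ht]
  exact le_antisymm (ciInf_le ⟨_, forall_mem_range.2 hy⟩ y) (le_ciInf hy)

theorem concaveOn_HL_inv (hf : BddBelow (range f)) (x : X) :
    ConcaveOn ℝ (Ioi 0) fun s => HL f s⁻¹ x := by
  have : Nonempty X := ⟨x⟩
  have haffine (y : X) : ConcaveOn ℝ (Ioi 0) fun s : ℝ => f y + dist x y ^ 2 / (2 * s⁻¹) := by
    refine ⟨convex_Ioi 0, fun r _ s _ a b _ _ hab => le_of_eq ?_⟩
    simp only [smul_eq_mul, div_eq_mul_inv, mul_inv, inv_inv]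
    linear_combination f y * hab
  refine (concaveOn_ciInf haffine fun s hs =>
    bddBelow_range_add_dist_sq hf (inv_pos.2 hs).le x).congr fun s hs => ?_
  exact (if_neg (inv_pos.2 hs).ne').symm

theorem countable_not_differentiableAt_HL (hf : BddBelow (range f)) (x : X) :
    {t ∈ Ioi 0 | ¬ DifferentiableAt ℝ (fun τ => HL f τ x) t}.Countable := by
  refine ((countable_not_differentiableAt_of_concaveOn (concaveOn_HL_inv hf x)).preimage
    inv_injective).mono ?_
  rintro t ⟨ht, hdiff⟩
  refine ⟨by simpa using ht, fun hinv => hdiff ?_⟩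
  simpa only [Function.comp_def, inv_inv] using hinv.comp t (differentiableAt_inv (ne_of_gt ht))

theorem deriv_HL_of_mem_minSet (hf : BddBelow (range f)) (ht : 0 < t)
    (hdiff : DifferentiableAt ℝ (fun τ => HL f τ x) t) (hy : y ∈ minSet f t x) :
    deriv (fun τ => HL f τ x) t = -(dist x y ^ 2 / (2 * t ^ 2)) := by
  have hmin : IsLocalMin (fun τ => f y + dist x y ^ 2 / (2 * τ) - HL f τ x) t := by
    filter_upwards [lt_mem_nhds ht] with τ hτ
    rw [HL_eq_of_mem_minSet ht.ne' hy, sub_self]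
    exact sub_nonneg.2 (HL_le hf hτ x y)
  have hcost : HasDerivAt (fun τ => f y + dist x y ^ 2 / (2 * τ))
      (-(dist x y ^ 2 / (2 * t ^ 2))) t := by
    have h := ((hasDerivAt_inv ht.ne').const_mul (dist x y ^ 2 / 2)).const_add (f y)
    refine (h.congr_of_eventuallyEq (.of_eq ?_)).congr_deriv ?_
    · ext τ
      simp only [div_eq_mul_inv, mul_inv, mul_assoc]
    · field_simp
  exact (sub_eq_zero.1 (hmin.hasDerivAt_eq_zero (hcost.sub hdiff.hasDerivAt))).symm

theorem Dplus_eq_dist_of_differentiableAt (hf : BddBelow (range f)) (ht : 0 < t)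
    (hdiff : DifferentiableAt ℝ (fun τ => HL f τ x) t) (hy : y ∈ minSet f t x) :
    Dplus f x t = dist x y := by
  have himage : dist x '' minSet f t x = {dist x y} := by
    refine eq_singleton_iff_unique_mem.2 ⟨mem_image_of_mem _ hy, forall_mem_image.2 fun z hz => ?_⟩
    have h := (deriv_HL_of_mem_minSet hf ht hdiff hz).symm.trans
      (deriv_HL_of_mem_minSet hf ht hdiff hy)
    rw [neg_inj, div_left_inj' (by positivity)] at h
    exact (sq_eq_sq₀ dist_nonneg dist_nonneg).1 h
  rw [Dplus, if_neg ht.ne', himage, csSup_singleton]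

theorem HL_sub_HL_le (hf : BddBelow (range f)) (ht : 0 < t) {x' : X} (hy : y ∈ minSet f t x') :
    HL f t x - HL f t x' ≤ dist x x' * ((dist x' y + dist x x' / 2) / t) := by
  calc HL f t x - HL f t x'
      ≤ f y + dist x y ^ 2 / (2 * t) - (f y + dist x' y ^ 2 / (2 * t)) := by
        rw [HL_eq_of_mem_minSet ht.ne' hy]
        gcongr
        exact HL_le hf ht x y
    _ ≤ f y + (dist x x' + dist x' y) ^ 2 / (2 * t) - (f y + dist x' y ^ 2 / (2 * t)) := by
        gcongr
        exact dist_triangle x x' y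
    _ = dist x x' * ((dist x' y + dist x x' / 2) / t) := by
        field_simp
        ring

end BddBelow

theorem Dplus_nonneg : 0 ≤ Dplus f x t := by
  rw [Dplus]
  split_ifs
  · exact le_rfl
  · exact Real.sSup_nonneg (forall_mem_image.2 fun y _ => dist_nonneg)

theorem dist_le_Dplus [BoundedSpace X] (ht : t ≠ 0) (hy : y ∈ minSet f t x) :
    dist x y ≤ Dplus f x t := by
  rw [Dplus, if_neg ht]
  have hbdd : BddAbove (dist x '' minSet f t x) :=
    ((LipschitzWith.dist_right x).isBounded_image (Bornology.IsBounded.all _)).bddAbove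
  exact le_csSup hbdd (mem_image_of_mem _ hy)

theorem lowerSemicontinuous_add_dist_sq (hf : LowerSemicontinuous f) (t : ℝ) :
    LowerSemicontinuous fun p : X × X => f p.2 + dist p.1 p.2 ^ 2 / (2 * t) :=
  (hf.comp continuous_snd).add (by fun_prop : Continuous _).lowerSemicontinuous

section Compact

variable [CompactSpace X]

theorem minSet_nonempty (hf : LowerSemicontinuous f) (t : ℝ) (x : X) :
    (minSet f t x).Nonempty := by
  have hcost : LowerSemicontinuous fun y => f y + dist x y ^ 2 / (2 * t) :=
    (lowerSemicontinuous_add_dist_sq hf t).comp (Continuous.prodMk_right x)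
  obtain ⟨y, -, hy⟩ :=
    (hcost.lowerSemicontinuousOn univ).exists_isMinOn ⟨x, mem_univ x⟩ isCompact_univ
  exact ⟨y, fun z => hy (mem_univ z)⟩

theorem eventually_forall_mem_minSet_dist_lt (hf : LowerSemicontinuous f) {D : ℝ}
    (hD : ∀ y ∈ minSet f t x, dist x y < D) :
    ∀ᶠ x' in 𝓝 x, ∀ y ∈ minSet f t x', dist x' y < D := by
  suffices h : ∀ᶠ x' in 𝓝 x, ∀ y ∈ (univ : Set X), y ∈ minSet f t x' → dist x' y < D by
    simpa only [mem_univ, forall_const] using h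
  refine isCompact_univ.eventually_forall_of_forall_eventually fun y _ => ?_
  by_cases hy : y ∈ minSet f t x
  · filter_upwards [continuous_dist.continuousAt.eventually_lt_const (hD y hy)] with p hp _
    exact hp
  · obtain ⟨z, hz⟩ : ∃ z, f z + dist x z ^ 2 / (2 * t) < f y + dist x y ^ 2 / (2 * t) := by
      simpa only [minSet, mem_ofPred_eq, not_forall, not_le] using hy
    obtain ⟨c, hzc, hcy⟩ := exists_between hz
    have hcost : ContinuousAt (fun p : X × X => f z + dist p.1 z ^ 2 / (2 * t)) (x, y) := by
      fun_prop
    filter_upwards [hcost.eventually_lt_const hzc,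
      lowerSemicontinuous_add_dist_sq hf t (x, y) c hcy] with p hpz hpy hmem
    exact absurd (hmem z) (hpz.trans hpy).not_ge

theorem upperSemicontinuous_Dplus (hf : LowerSemicontinuous f) (t : ℝ) :
    UpperSemicontinuous fun x => Dplus f x t := by
  rcases eq_or_ne t 0 with rfl | ht
  · simpa only [Dplus, if_true] using upperSemicontinuous_const
  intro x D hD
  obtain ⟨D', hxD', hD'⟩ := exists_between hD
  filter_upwards [eventually_forall_mem_minSet_dist_lt hf fun y hy =>
    (dist_le_Dplus ht hy).trans_lt hxD'] with x' hx'
  rw [Dplus, if_neg ht]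
  refine (csSup_le ((minSet_nonempty hf t x').image _) ?_).trans_lt hD'
  exact forall_mem_image.2 fun y hy => (hx' y hy).le

theorem abs_HL_sub_HL_le (hf : LowerSemicontinuous f) (ht : 0 < t) (x x' : X) :
    |HL f t x - HL f t x'| ≤
      dist x x' * ((max (Dplus f x t) (Dplus f x' t) + dist x x' / 2) / t) := by
  have hbdd := bddBelow_range_of_lowerSemicontinuous hf
  obtain ⟨y, hy⟩ := minSet_nonempty hf t x
  obtain ⟨y', hy'⟩ := minSet_nonempty hf t x'
  refine abs_sub_le_iff.2 ⟨(HL_sub_HL_le hbdd ht hy').trans ?_, (HL_sub_HL_le hbdd ht hy).trans ?_⟩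
  · gcongr
    exact (dist_le_Dplus ht.ne' hy').trans (le_max_right _ _)
  · rw [dist_comm x' x]
    gcongr
    exact (dist_le_Dplus ht.ne' hy).trans (le_max_left _ _)

theorem locSlope_HL_le (hf : LowerSemicontinuous f) (ht : 0 < t) (x : X) :
    locSlope (HL f t) x ≤ Dplus f x t / t := by
  refine locSlope_le_of_forall_gt (div_nonneg Dplus_nonneg ht.le) fun c hc => ?_
  have husc : UpperSemicontinuous fun x' =>
      max (Dplus f x' t) (Dplus f x t) + dist x' x / 2 :=
    ((upperSemicontinuous_Dplus hf t).sup upperSemicontinuous_const).add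
      (by fun_prop : Continuous fun x' => dist x' x / 2).upperSemicontinuous
  have hlt : max (Dplus f x t) (Dplus f x t) + dist x x / 2 < c * t := by
    simpa using (div_lt_iff₀ ht).1 hc
  filter_upwards [nhdsWithin_le_nhds (husc x (c * t) hlt), self_mem_nhdsWithin] with x' hx' hne
  rw [div_le_iff₀' (dist_pos.2 hne)]
  refine (abs_HL_sub_HL_le hf ht x' x).trans ?_
  gcongr
  exact ((div_lt_iff₀ ht).2 hx').le

theorem hasDerivAt_HL_Dplus (hf : LowerSemicontinuous f) (ht : 0 < t)
    (hdiff : DifferentiableAt ℝ (fun τ => HL f τ x) t) :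
    HasDerivAt (fun τ => HL f τ x) (-(Dplus f x t ^ 2 / (2 * t ^ 2))) t := by
  have hbdd := bddBelow_range_of_lowerSemicontinuous hf
  obtain ⟨y, hy⟩ := minSet_nonempty hf t x
  rw [Dplus_eq_dist_of_differentiableAt hbdd ht hdiff hy,
    ← deriv_HL_of_mem_minSet hbdd ht hdiff hy]
  exact hdiff.hasDerivAt

theorem stmt4_general (hf : LowerSemicontinuous f) (x : X) :
    ∃ E : Set ℝ, E.Countable ∧ ∀ t ∈ Ioi (0 : ℝ), t ∉ E →
      ∃ d : ℝ, HasDerivAt (fun τ : ℝ => HL f τ x) d t ∧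
        d + (1 / 2) * (locSlope (HL f t) x) ^ 2 ≤ 0 := by
  refine ⟨_, countable_not_differentiableAt_HL (bddBelow_range_of_lowerSemicontinuous hf) x,
    fun t ht htE => ?_⟩
  have hdiff : DifferentiableAt ℝ (fun τ => HL f τ x) t := by_contra fun h => htE ⟨ht, h⟩
  refine ⟨_, hasDerivAt_HL_Dplus hf ht hdiff, ?_⟩
  have hslope : locSlope (HL f t) x ^ 2 ≤ (Dplus f x t / t) ^ 2 :=
    pow_le_pow_left₀ locSlope_nonneg (locSlope_HL_le hf ht x) 2
  calc -(Dplus f x t ^ 2 / (2 * t ^ 2)) + 1 / 2 * locSlope (HL f t) x ^ 2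
      ≤ -(Dplus f x t ^ 2 / (2 * t ^ 2)) + 1 / 2 * (Dplus f x t / t) ^ 2 := by gcongr
    _ = 0 := by ring

end Compact

end HopfLax

/-- **Subsolution of the Hamilton–Jacobi equation** (Theorem 3.5): for a Lipschitz `f` on a
compact metric space and every `x ∈ X`, for all `t ∈ (0,∞)` with at most countably many
exceptions the derivative `(d/dt) Q_t f (x)` exists and
`(d/dt) Q_t f (x) + ½ |D Q_t f|²(x) ≤ 0`. -/
theorem stmt4 {X : Type*} [MetricSpace X] [CompactSpace X] [Nonempty X]
    (f : X → ℝ) (hf : ∃ K : ℝ≥0, LipschitzWith K f) :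
    ∀ x : X, ∃ E : Set ℝ, E.Countable ∧ ∀ t ∈ Ioi (0 : ℝ), t ∉ E →
      ∃ d : ℝ, HasDerivAt (fun τ : ℝ => HL f τ x) d t ∧
        d + (1 / 2) * (locSlope (HL f t) x) ^ 2 ≤ 0 := by
  obtain ⟨K, hK⟩ := hf
  exact stmt4_general hK.continuous.lowerSemicontinuous
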